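/- Let D be a strongly connected digraph of order n ≥ 4. If the full vertex set V(D) satisfies condition A0, then D is Hamiltonian. -/

import Mathlib

/-!
Basic definitions for finite digraphs (no loops, no multiple arcs), where the arc
relation is `A : V → V → Prop`.  Paths and cycles are given as lists of (distinct)
vertices.
-/

variable {V : Type*}

/-- A (directed) path, given by the list of its vertices. -/
def IsPathOn (A : V → V → Prop) (l : List V) : Prop :=
  l ≠ [] ∧ l.Nodup ∧ l.Chain' A

/-- A (directed) cycle, given by the list of its vertices; its length (number of
arcs) equals the length of the list. -/
def IsCycleOn (A : V → V → Prop) (l : List V) : Prop :=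
  2 ≤ l.length ∧ l.Nodup ∧ l.Chain' A ∧
    ∀ a ∈ l.getLast?, ∀ b ∈ l.head?, A a b

/-- A directed path from `a` to `b`. -/
def IsPathFromTo (A : V → V → Prop) (l : List V) (a b : V) : Prop :=
  IsPathOn A l ∧ l.head? = some a ∧ l.getLast? = some b

/-- Out-degree `d⁺(x)`. -/
noncomputable def outDeg (A : V → V → Prop) (x : V) : ℕ := {y | A x y}.ncard

/-- In-degree `d⁻(x)`. -/
noncomputable def inDeg (A : V → V → Prop) (x : V) : ℕ := {y | A y x}.ncard

/-- Degree `d(x) = d⁺(x) + d⁻(x)`. -/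
noncomputable def deg (A : V → V → Prop) (x : V) : ℕ := outDeg A x + inDeg A x

/-- Out-degree into a set, `d⁺(x, S)`. -/
noncomputable def outDegOn (A : V → V → Prop) (x : V) (S : Set V) : ℕ :=
  {y ∈ S | A x y}.ncard

/-- In-degree from a set, `d⁻(x, S)`. -/
noncomputable def inDegOn (A : V → V → Prop) (x : V) (S : Set V) : ℕ :=
  {y ∈ S | A y x}.ncard

/-- Degree with respect to a set, `d(x, S) = d⁺(x, S) + d⁻(x, S)`. -/
noncomputable def degOn (A : V → V → Prop) (x : V) (S : Set V) : ℕ :=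
  outDegOn A x S + inDegOn A x S

/-- Two distinct vertices are adjacent if there is an arc between them in some
direction. -/
def DAdj (A : V → V → Prop) (x y : V) : Prop := A x y ∨ A y x

/-- `D` is `S`-strongly connected: between any two distinct vertices of `S` there
are directed paths in both directions. -/
def SetStronglyConnected (A : V → V → Prop) (S : Set V) : Prop :=
  ∀ x ∈ S, ∀ y ∈ S, x ≠ y → ∃ l, IsPathFromTo A l x y

/-- Strong connectivity. -/
def StronglyConnected (A : V → V → Prop) : Prop :=
  ∀ x y : V, x ≠ y → ∃ l, IsPathFromTo A l x y

/-- 2-strong connectivity: at least 3 vertices, and deleting any vertex leaves a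
strongly connected digraph. -/
def TwoStronglyConnected [Fintype V] (A : V → V → Prop) : Prop :=
  3 ≤ Fintype.card V ∧
    ∀ w x y : V, x ≠ w → y ≠ w → x ≠ y → ∃ l, IsPathFromTo A l x y ∧ w ∉ l

/-- Condition `A₀` for a set `Y` of vertices. -/
def CondA0 [Fintype V] (A : V → V → Prop) (Y : Set V) : Prop :=
  ∀ x ∈ Y, ∀ y ∈ Y, ∀ z ∈ Y,
    x ≠ y → x ≠ z → y ≠ z → ¬ DAdj A x y →
      (¬ A x z →
        deg A x + deg A y + outDeg A x + inDeg A z ≥ 3 * Fintype.card V - 2) ∧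
      (¬ A z x →
        deg A x + deg A y + inDeg A x + outDeg A z ≥ 3 * Fintype.card V - 2)

/-- A `C`-bypass: a path of length at least two whose end-vertices lie on the
cycle `c` and whose internal vertices avoid `c`. -/
def IsBypass (A : V → V → Prop) (c p : List V) : Prop :=
  IsPathOn A p ∧ 3 ≤ p.length ∧
    (∀ a ∈ p.head?, a ∈ c) ∧ (∀ b ∈ p.getLast?, b ∈ c) ∧
    ∀ v ∈ p.tail.dropLast, v ∉ c

/-- The vertex `y` can be inserted into the path `p`. -/
def CanInsert (A : V → V → Prop) (p : List V) (y : V) : Prop :=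
  ∃ i, ∃ h : i + 1 < p.length, A (p[i]'(Nat.lt_of_succ_lt h)) y ∧ A y (p[i+1]'h)

/-- A `(C, x)`-path: a path from a vertex `u` of the cycle `c` to `x`, meeting `c`
only in `u`. -/
def IsCtoXPath (A : V → V → Prop) (c l : List V) (u x : V) : Prop :=
  IsPathFromTo A l u x ∧ u ∈ c ∧ ∀ v ∈ l, v ∈ c → v = u

/-- An `(x, C)`-path: a path from `x` to a vertex `v` of the cycle `c`, meeting `c`
only in `v`. -/
def IsXtoCPath (A : V → V → Prop) (c l : List V) (x v : V) : Prop :=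
  IsPathFromTo A l x v ∧ v ∈ c ∧ ∀ w ∈ l, w ∈ c → w = v

/-!
Call nonadjacent vertices `x`, `y` with `d(x) + d(y) ≤ 2n - 2` a bad pair; by A0 every vertex lies
in at most one of them. Let `u` be a vertex off a longest cycle `C`, and take a segment of `C`
whose ends are joined by a walk through `u` off `C`, the rest of `C` being as small as possible.
Inserting that rest into the segment as far as possible cannot succeed entirely, and each vertex
left over forms a bad pair with every vertex of the strong component of `u` off `C`. So one vertex
`y` is left over and the component is `{u}`; counting degrees, `C` misses nothing but `u`.

The other `n - 2` vertices now form a path on which the out-neighbours of `u` weakly precede its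
in-neighbours, and likewise for `y`. The degrees that A0 enforces produce a crossing pair of arcs,
hence a cycle through `u`, `y` and all of the path but some vertices not adjacent to both. These
have degrees so large that they can be inserted into the cycle one after another.
-/

section Lists

variable {α : Type*} {P Q : α → Prop}

section CountP

variable [DecidablePred P] [DecidablePred Q]

lemma countP_add_countP_eq_or_add_and (l : List α) :
    l.countP P + l.countP Q =
      l.countP (fun x => P x ∨ Q x) + l.countP (fun x => P x ∧ Q x) := by
  induction l with
  | nil => rfl
  | cons a l ih =>
    by_cases hP : P a <;> by_cases hQ : Q a <;>
      simp [hP, hQ, -Bool.decide_or, -Bool.decide_and] <;> omega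

lemma countP_or_add_countP_and_not (l : List α) :
    l.countP (fun x => P x ∨ Q x) + l.countP (fun x => ¬ P x ∧ ¬ Q x) = l.length := by
  rw [List.length_eq_countP_add_countP (fun x => decide (P x ∨ Q x))]
  congr 1
  exact List.countP_congr fun x _ => by simp

lemma countP_le_countP_of_nodup {s t : List α} (hs : s.Nodup) (h : ∀ x ∈ s, P x → x ∈ t) :
    s.countP P ≤ t.countP P := by
  have hsub : (s.filter P).Subperm t :=
    List.subperm_of_subset (hs.filter _) fun x hx => by
      obtain ⟨hxs, hPx⟩ := List.mem_filter.1 hx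
      exact h x hxs (of_decide_eq_true hPx)
  simpa [List.countP_filter] using hsub.countP_le fun x => decide (P x)

lemma countP_add_countP_add_two_le {l : List α} {a b : α} (h : ∀ x ∈ l, ¬ (P x ∧ Q x))
    (ha : a ∈ l) (hb : b ∈ l) (hab : a ≠ b) (hPa : ¬ P a) (hQa : ¬ Q a) (hPb : ¬ P b)
    (hQb : ¬ Q b) : l.countP P + l.countP Q + 2 ≤ l.length := by
  have hand : l.countP (fun x => P x ∧ Q x) = 0 :=
    List.countP_eq_zero.2 fun x hx => by simpa using h x hx
  have hpair : [a, b].countP (fun x => ¬ P x ∧ ¬ Q x) ≤ l.countP (fun x => ¬ P x ∧ ¬ Q x) :=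
    countP_le_countP_of_nodup (by simpa using hab) (by simp [ha, hb])
  have htwo : [a, b].countP (fun x => ¬ P x ∧ ¬ Q x) = 2 := by
    simp [hPa, hQa, hPb, hQb]
  rw [htwo] at hpair
  have hor := countP_or_add_countP_and_not (P := P) (Q := Q) l
  rw [countP_add_countP_eq_or_add_and, hand]
  omega

lemma countP_and_le_one_of_pairwise {l : List α} (h : l.Pairwise fun a b => ¬ (P a ∧ Q b)) :
    l.countP (fun x => P x ∧ Q x) ≤ 1 := by
  induction l with
  | nil => simp
  | cons a l ih =>
    obtain ⟨ha, hl⟩ := List.pairwise_cons.1 h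
    by_cases hPa : P a
    · have : l.countP (fun x => P x ∧ Q x) = 0 :=
        List.countP_eq_zero.2 fun x hx => by simpa using fun _ hQx => ha x hx ⟨hPa, hQx⟩
      rw [List.countP_cons, this]
      split_ifs <;> omega
    · simpa [List.countP_cons, hPa] using ih hl

lemma countP_dropLast_add_countP_tail_lt {l : List α} (hne : l ≠ [])
    (h : l.IsChain fun a b => ¬ (P a ∧ Q b)) :
    l.dropLast.countP P + l.tail.countP Q < l.length := by
  induction l with
  | nil => exact absurd rfl hne
  | cons a l ih =>
    cases l with
    | nil => simp
    | cons b l =>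
      obtain ⟨hab, hl⟩ := List.isChain_cons_cons.1 h
      have hrec := ih (List.cons_ne_nil b l) hl
      rw [List.dropLast_cons_of_ne_nil (List.cons_ne_nil b l), List.tail_cons]
      simp only [List.tail_cons, List.countP_cons, List.length_cons, decide_eq_true_eq] at hrec ⊢
      split_ifs with hPa hQb
      · exact absurd ⟨hPa, hQb⟩ hab
      all_goals omega

lemma countP_add_countP_le_of_isChain {l : List α} (h : l.IsChain fun a b => ¬ (P a ∧ Q b)) :
    l.countP P + l.countP Q ≤ l.length + 1 := by
  rcases eq_or_ne l [] with rfl | hne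
  · simp
  have hmid := countP_dropLast_add_countP_tail_lt hne h
  have hP : l.countP P ≤ l.dropLast.countP P + 1 := by
    conv_lhs => rw [← List.dropLast_append_getLast hne]
    rw [List.countP_append]
    exact Nat.add_le_add_left List.countP_le_length _
  have hQ : l.countP Q ≤ l.tail.countP Q + 1 := by
    conv_lhs => rw [← List.cons_head_tail hne]
    rw [List.countP_cons]
    split_ifs <;> omega
  omega

lemma countP_add_countP_le_of_cycleChain {l : List α}
    (h : Cycle.Chain (fun a b => ¬ (P a ∧ Q b)) (l : Cycle α)) :
    l.countP P + l.countP Q ≤ l.length := by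
  cases l with
  | nil => simp
  | cons a l =>
    have := countP_dropLast_add_countP_tail_lt (List.cons_ne_nil _ _)
      ((Cycle.chain_coe_cons _ a l).1 h)
    rw [← List.cons_append, List.dropLast_concat] at this
    simp only [List.cons_append, List.tail_cons, List.countP_append, List.countP_cons,
      List.countP_nil, List.length_cons, List.length_append, List.length_nil] at this ⊢
    omega

lemma exists_mem_of_length_lt_countP_append {l₁ l₂ : List α}
    (h : l₁.length < (l₁ ++ l₂).countP P) : ∃ v ∈ l₂, P v := by
  rw [List.countP_append] at h
  have := List.countP_le_length (p := fun x => decide (P x)) (l := l₁)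
  simpa using List.countP_pos_iff.1 (show 0 < l₂.countP P by omega)

end CountP

lemma exists_eq_append_cons_first {l : List α} (h : ∃ x ∈ l, P x) :
    ∃ l₁ a l₂, l = l₁ ++ a :: l₂ ∧ P a ∧ ∀ v ∈ l₁, ¬ P v := by
  classical
  obtain ⟨a, ha⟩ := Option.isSome_iff_exists.1
    (List.find?_isSome (p := fun x => decide (P x)).2 (by simpa using h))
  obtain ⟨hPa, l₁, l₂, hl, hl₁⟩ := List.find?_eq_some_iff_append.1 ha
  exact ⟨l₁, a, l₂, hl, by simpa using hPa, by simpa using hl₁⟩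

lemma exists_eq_append_cons_last {l : List α} (h : ∃ x ∈ l, P x) :
    ∃ l₁ a l₂, l = l₁ ++ a :: l₂ ∧ P a ∧ ∀ v ∈ l₂, ¬ P v := by
  obtain ⟨l₁, a, l₂, hl, ha, hl₁⟩ :=
    exists_eq_append_cons_first (l := l.reverse) (P := P) (by simpa using h)
  exact ⟨l₂.reverse, a, l₁.reverse, by simpa using congrArg List.reverse hl, ha,
    by simpa using hl₁⟩

lemma exists_eq_append_append_first_last {l : List α} (h : ∃ x ∈ l, P x) :
    ∃ l₁ m l₂ a b, l = l₁ ++ m ++ l₂ ∧ m.head? = some a ∧ m.getLast? = some b ∧ P a ∧ P b ∧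
      ∀ v ∈ l₁ ++ l₂, ¬ P v := by
  obtain ⟨l₁, a, l', rfl, ha, hl₁⟩ := exists_eq_append_cons_first h
  obtain ⟨m, b, l₂, hm, hb, hl₂⟩ :=
    exists_eq_append_cons_last (l := a :: l') ⟨a, List.mem_cons_self, ha⟩
  refine ⟨l₁, m ++ [b], l₂, a, b, by simp [hm], ?_, by simp, ha, hb, ?_⟩
  · cases m <;> simp_all
  · simpa only [List.forall_mem_append] using ⟨hl₁, hl₂⟩

lemma exists_isRotated_append_of_mem {l : List α} {s t : α} (hs : s ∈ l) (ht : t ∈ l) :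
    ∃ B G, B ++ G ~r l ∧ B.head? = some s ∧ B.getLast? = some t := by
  obtain ⟨l₁, l₂, rfl⟩ := List.append_of_mem hs
  obtain ⟨B, G, hBG⟩ := List.append_of_mem (List.isRotated_append.perm.mem_iff.1 ht)
  refine ⟨B ++ [t], G, ?_, ?_, by simp⟩
  · rw [List.append_assoc, List.singleton_append, ← hBG]
    exact List.isRotated_append
  · cases B <;> simp_all

/- Each vertex of `G` satisfying `P` or `Q` may become the new first or last vertex of `B`, so
induction on the length of `G` applies. -/
lemma exists_isRotated_append_forall_not {B G : List α} {s t : α} (hs : B.head? = some s)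
    (hPs : P s) (ht : B.getLast? = some t) (hQt : Q t) :
    ∃ B' G' s' t', B' ++ G' ~r B ++ G ∧ G' ⊆ G ∧ B'.head? = some s' ∧ P s' ∧
      B'.getLast? = some t' ∧ Q t' ∧ ∀ g ∈ G', ¬ P g ∧ ¬ Q g := by
  induction hk : G.length using Nat.strong_induction_on generalizing B G s t with
  | _ k ih =>
    subst hk
    by_cases hG : ∀ g ∈ G, ¬ P g ∧ ¬ Q g
    · exact ⟨B, G, s, t, .refl _, List.Subset.refl G, hs, hPs, ht, hQt, hG⟩
    obtain ⟨g, hg, hPQ⟩ : ∃ g ∈ G, P g ∨ Q g := by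
      push Not at hG
      exact hG.imp fun g h => ⟨h.1, or_iff_not_imp_left.2 h.2⟩
    obtain ⟨G₁, G₂, rfl⟩ := List.append_of_mem hg
    rcases hPQ with hPg | hQg
    · obtain ⟨B', G', s', t', hrot, hsub, hrest⟩ := ih G₁.length (by simp) (B := g :: G₂ ++ B)
        (G := G₁) rfl hPg (by rw [List.getLast?_append, ht, Option.some_or]) hQt rfl
      refine ⟨B', G', s', t', hrot.trans ?_, fun x hx => by simp [hsub hx], hrest⟩
      simpa using List.isRotated_append (l := g :: G₂) (l' := B ++ G₁)
    · obtain ⟨B', G', s', t', hrot, hsub, hrest⟩ := ih G₂.length (by simp; omega)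
        (B := B ++ G₁ ++ [g]) (G := G₂) (by simp [List.head?_append, hs]) hPs (by simp) hQg rfl
      exact ⟨B', G', s', t', by simpa using hrot, fun x hx => by simp [hsub hx], hrest⟩

lemma exists_forall_length_le [Finite α] {p : List α → Prop} (hnodup : ∀ l, p l → l.Nodup)
    (h : ∃ l, p l) : ∃ l, p l ∧ ∀ l', p l' → l'.length ≤ l.length := by
  have := Fintype.ofFinite α
  have hfin : {l | p l}.Finite :=
    (List.finite_length_le α (Fintype.card α)).subset fun l hl => (hnodup l hl).length_le_card
  exact Set.exists_max_image _ List.length hfin h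

end Lists

section Enumerations

/-- The list `l` contains every vertex exactly once, so that degrees become counts over `l`. -/
def IsEnumeration (l : List V) : Prop := l.Nodup ∧ ∀ v, v ∈ l

lemma IsEnumeration.of_perm {l l' : List V} (h : IsEnumeration l) (hp : l'.Perm l) :
    IsEnumeration l' :=
  ⟨hp.nodup_iff.2 h.1, fun v => hp.mem_iff.2 (h.2 v)⟩

lemma IsEnumeration.length_eq_card [Fintype V] {l : List V} (h : IsEnumeration l) :
    l.length = Fintype.card V := by
  classical
  rw [← List.toFinset_card_of_nodup h.1, ← Finset.card_univ]
  exact congrArg Finset.card (Finset.eq_univ_iff_forall.2 fun v => List.mem_toFinset.2 (h.2 v))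

lemma exists_isEnumeration_append [Finite V] {l : List V} (hl : l.Nodup) :
    ∃ T, IsEnumeration (l ++ T) := by
  classical
  have := Fintype.ofFinite V
  refine ⟨Finset.univ.toList.filter (· ∉ l), ?_, fun v => by simp [em]⟩
  refine List.nodup_append'.2 ⟨hl, (Finset.nodup_toList _).filter _, fun v hv hv' => ?_⟩
  simp [hv] at hv'

lemma IsEnumeration.ncard_setOf_eq_countP {l : List V} (hl : IsEnumeration l) (P : V → Prop)
    [DecidablePred P] : {v | P v}.ncard = l.countP P := by
  classical
  have : {v | P v} = ↑(l.filter P).toFinset := by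
    ext v
    simp [hl.2 v]
  rw [this, Set.ncard_coe_finset, List.toFinset_card_of_nodup (hl.1.filter _),
    List.countP_eq_length_filter]

open Classical in
/-- The number of out-neighbours of `x` on the list `l`. -/
noncomputable def outCount (A : V → V → Prop) (x : V) (l : List V) : ℕ := l.countP fun v => A x v

open Classical in
/-- The number of in-neighbours of `x` on the list `l`. -/
noncomputable def inCount (A : V → V → Prop) (x : V) (l : List V) : ℕ := l.countP fun v => A v x

open Classical in
/-- The number of vertices on the list `l` that are not adjacent to `x`. -/
noncomputable def nonadjCount (A : V → V → Prop) (x : V) (l : List V) : ℕ :=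
  l.countP fun v => ¬ DAdj A x v

variable {A : V → V → Prop}

lemma outCount_append (x : V) (l₁ l₂ : List V) :
    outCount A x (l₁ ++ l₂) = outCount A x l₁ + outCount A x l₂ :=
  List.countP_append

lemma inCount_append (x : V) (l₁ l₂ : List V) :
    inCount A x (l₁ ++ l₂) = inCount A x l₁ + inCount A x l₂ :=
  List.countP_append

lemma nonadjCount_append (x : V) (l₁ l₂ : List V) :
    nonadjCount A x (l₁ ++ l₂) = nonadjCount A x l₁ + nonadjCount A x l₂ :=
  List.countP_append

lemma IsEnumeration.outDeg_eq {l : List V} (h : IsEnumeration l) (x : V) :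
    outDeg A x = outCount A x l := by
  classical exact h.ncard_setOf_eq_countP (A x)

lemma IsEnumeration.inDeg_eq {l : List V} (h : IsEnumeration l) (x : V) :
    inDeg A x = inCount A x l := by
  classical exact h.ncard_setOf_eq_countP fun v => A v x

lemma IsEnumeration.deg_eq {l : List V} (h : IsEnumeration l) (x : V) :
    deg A x = outCount A x l + inCount A x l :=
  congrArg₂ (· + ·) (h.outDeg_eq x) (h.inDeg_eq x)

end Enumerations

section Cycles

variable {A : V → V → Prop} {l X : List V} {s t : V}

lemma cycleChain_of_forall_isRotated {R : V → V → Prop}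
    (h : ∀ c, c ~r l → ∀ a ∈ c.getLast?, ∀ b ∈ c.head?, R a b) :
    Cycle.Chain R (l : Cycle V) := by
  cases l with
  | nil => exact Cycle.Chain.nil R
  | cons v l =>
    rw [Cycle.chain_coe_cons, List.isChain_iff_forall_rel_of_append_cons_cons]
    intro a b l₁ l₂ hl
    rcases List.eq_nil_or_concat l₂ with rfl | ⟨l₃, x, rfl⟩
    · obtain ⟨hl₁, rfl⟩ : v :: l = l₁ ++ [a] ∧ v = b := by
        have : (v :: l) ++ [v] = (l₁ ++ [a]) ++ [b] := by simpa using hl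
        simpa using List.append_inj' this rfl
      exact h (v :: l) (.refl _) a (by simp [hl₁]) v rfl
    · have hcycle : v :: l = (l₁ ++ [a]) ++ b :: l₃ := by
        have : (v :: l) ++ [v] = (l₁ ++ a :: b :: l₃) ++ [x] := by simpa using hl
        simpa using (List.append_inj' this rfl).1
      exact h (b :: l₃ ++ (l₁ ++ [a])) (hcycle ▸ List.isRotated_append) a
        (by rw [← List.append_assoc, List.getLast?_concat]; rfl) b rfl

lemma isCycleOn_iff_cycleChain :
    IsCycleOn A l ↔ 2 ≤ l.length ∧ l.Nodup ∧ Cycle.Chain A (l : Cycle V) := by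
  unfold IsCycleOn
  cases l with
  | nil => simp
  | cons v l =>
    rw [Cycle.chain_coe_cons, ← List.cons_append, List.isChain_append]
    exact and_congr_right' (and_congr_right' (and_congr Iff.rfl (by simp)))

lemma IsCycleOn.of_isRotated {c : List V} (hl : IsCycleOn A l) (h : c ~r l) : IsCycleOn A c := by
  rw [isCycleOn_iff_cycleChain] at hl ⊢
  rwa [h.perm.length_eq, h.nodup_iff, Cycle.coe_eq_coe.2 h]

lemma IsCycleOn.ne_nil (hl : IsCycleOn A l) : l ≠ [] := by
  rintro rfl
  simpa using hl.1

lemma isPathFromTo_singleton (A : V → V → Prop) (a : V) : IsPathFromTo A [a] a a :=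
  ⟨⟨by simp, by simp, List.isChain_singleton a⟩, rfl, rfl⟩

lemma isPathFromTo_pair {a b : V} (hab : A a b) (hne : a ≠ b) : IsPathFromTo A [a, b] a b :=
  ⟨⟨by simp, by simpa using hne, List.isChain_pair.2 hab⟩, rfl, rfl⟩

lemma IsPathFromTo.isCycleOn_append {p : List V} {x y : V} (hp : IsPathFromTo A p x y)
    (hX : IsPathFromTo A X s t) (hd : p.Disjoint X) (hys : A y s) (htx : A t x) :
    IsCycleOn A (p ++ X) := by
  obtain ⟨⟨hpne, hpn, hpc⟩, hx, hy⟩ := hp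
  obtain ⟨⟨hXne, hXn, hXc⟩, hs, ht⟩ := hX
  refine ⟨?_, List.nodup_append'.2 ⟨hpn, hXn, hd⟩, List.isChain_append.2 ⟨hpc, hXc, ?_⟩, ?_⟩
  · have := List.length_pos_iff.2 hpne
    have := List.length_pos_iff.2 hXne
    rw [List.length_append]
    omega
  · simpa [hy, hs] using hys
  · simpa [List.getLast?_append, List.head?_append, ht, hx] using htx

/- A rotation of `l` ending in `a` and starting in `b` closes up through `X` if `A a s` and
`A t b`. -/
lemma IsCycleOn.cycleChain_of_not_perm (hl : IsCycleOn A l) (hX : IsPathFromTo A X s t)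
    (hd : l.Disjoint X) (hno : ∀ c, IsCycleOn A c → ¬ c.Perm (l ++ X)) :
    Cycle.Chain (fun a b => ¬ (A a s ∧ A t b)) (l : Cycle V) := by
  refine cycleChain_of_forall_isRotated fun c hc a ha b hb ⟨has, htb⟩ => ?_
  obtain ⟨-, hcn, hcc, -⟩ := hl.of_isRotated hc
  have hpath : IsPathFromTo A c b a := ⟨⟨(hl.of_isRotated hc).ne_nil, hcn, hcc⟩, hb, ha⟩
  exact hno _ (hpath.isCycleOn_append hX (fun v hv => hd (hc.perm.mem_iff.1 hv)) has htb)
    (hc.perm.append_right X)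

lemma IsCycleOn.exists_perm_append_of_length_lt (hl : IsCycleOn A l) (hX : IsPathFromTo A X s t)
    (hd : l.Disjoint X) (hlt : l.length < inCount A s l + outCount A t l) :
    ∃ c, IsCycleOn A c ∧ c.Perm (l ++ X) := by
  classical
  by_contra! hno
  exact hlt.not_ge (countP_add_countP_le_of_cycleChain (hl.cycleChain_of_not_perm hX hd hno))

/-- The cycle `l` has the largest length among all cycles. -/
def IsLongestCycle (A : V → V → Prop) (l : List V) : Prop :=
  IsCycleOn A l ∧ ∀ c, IsCycleOn A c → c.length ≤ l.length

lemma IsLongestCycle.of_length_eq {c : List V} (hl : IsLongestCycle A l) (hc : IsCycleOn A c)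
    (hlen : c.length = l.length) : IsLongestCycle A c :=
  ⟨hc, fun c' hc' => hlen ▸ hl.2 c' hc'⟩

lemma IsLongestCycle.not_perm_append {c : List V} (hl : IsLongestCycle A l) (hX : X ≠ [])
    (hc : IsCycleOn A c) : ¬ c.Perm (l ++ X) := fun hperm => by
  have hlen := hperm.length_eq
  have hle := hl.2 c hc
  have := List.length_pos_iff.2 hX
  rw [List.length_append] at hlen
  omega

lemma IsLongestCycle.cycleChain (hl : IsLongestCycle A l) (hX : IsPathFromTo A X s t)
    (hd : l.Disjoint X) : Cycle.Chain (fun a b => ¬ (A a s ∧ A t b)) (l : Cycle V) :=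
  hl.1.cycleChain_of_not_perm hX hd fun _ => hl.not_perm_append hX.1.1

lemma IsLongestCycle.inCount_add_outCount_le (hl : IsLongestCycle A l)
    (hX : IsPathFromTo A X s t) (hd : l.Disjoint X) :
    inCount A s l + outCount A t l ≤ l.length := by
  classical
  exact countP_add_countP_le_of_cycleChain (hl.cycleChain hX hd)

lemma exists_isLongestCycle [Finite V] (h : ∃ c, IsCycleOn A c) : ∃ l, IsLongestCycle A l :=
  exists_forall_length_le (fun _ hl => hl.2.1) h

lemma not_canInsert_iff_isChain {p : List V} {z : V} :
    ¬ CanInsert A p z ↔ p.IsChain fun a b => ¬ (A a z ∧ A z b) := by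
  simp only [CanInsert, not_exists, List.isChain_iff_getElem]

lemma canInsert_iff_exists_append {p : List V} {z : V} :
    CanInsert A p z ↔ ∃ l₁ a b l₂, p = l₁ ++ a :: b :: l₂ ∧ A a z ∧ A z b := by
  rw [← not_iff_not, not_canInsert_iff_isChain, List.isChain_iff_forall_rel_of_append_cons_cons]
  constructor
  · rintro h ⟨l₁, a, b, l₂, hp, hab⟩
    exact h hp hab
  · exact fun h a b l₁ l₂ hp hab => h ⟨l₁, a, b, l₂, hp, hab⟩

lemma inCount_add_outCount_le_of_not_canInsert {p : List V} {z : V} (h : ¬ CanInsert A p z) :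
    inCount A z p + outCount A z p ≤ p.length + 1 := by
  classical
  exact countP_add_countP_le_of_isChain (not_canInsert_iff_isChain.1 h)

lemma IsLongestCycle.not_canInsert (hl : IsLongestCycle A l) {B G : List V} {w : V}
    (hrot : B ++ G ~r l) (hw : w ∉ l) : ¬ CanInsert A B w := by
  rw [not_canInsert_iff_isChain]
  have hchain := hl.cycleChain (isPathFromTo_singleton A w) (by simpa using hw)
  rw [← Cycle.coe_eq_coe.2 hrot] at hchain
  cases B with
  | nil => exact List.isChain_nil
  | cons b B =>
    rw [List.cons_append, Cycle.chain_coe_cons] at hchain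
    exact hchain.infix ⟨[], G ++ [b], by simp⟩

lemma StronglyConnected.reflTransGen (h : StronglyConnected A) (x y : V) :
    Relation.ReflTransGen A x y := by
  rcases eq_or_ne x y with rfl | hxy
  · exact .refl
  obtain ⟨l, ⟨hne, -, hl⟩, hx, hy⟩ := h x y hxy
  have := List.relationReflTransGen_of_exists_isChain l hl hne
  rwa [(List.head_eq_iff_head?_eq_some hne).2 hx,
    (List.getLast_eq_iff_getLast?_eq_some hne).2 hy] at this

lemma StronglyConnected.exists_isCycleOn [Nontrivial V] (hirr : ∀ v, ¬ A v v)
    (h : StronglyConnected A) : ∃ c, IsCycleOn A c := by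
  obtain ⟨a, b, hab⟩ := exists_pair_ne V
  obtain ⟨x, hax, -⟩ := (Relation.ReflTransGen.cases_head (h.reflTransGen a b)).resolve_left hab
  have hxa : x ≠ a := by
    rintro rfl
    exact hirr x hax
  obtain ⟨l, ⟨-, hn, hl⟩, hx, ha⟩ := h x a hxa
  refine ⟨l, ?_, hn, hl, by simpa [hx, ha] using hax⟩
  rcases l with _ | ⟨c, _ | ⟨d, l⟩⟩ <;> simp_all

end Cycles

section BadPairs

lemma deg_flip (A : V → V → Prop) (x : V) : deg (flip A) x = deg A x := add_comm _ _

lemma dAdj_flip {A : V → V → Prop} {x y : V} : DAdj (flip A) x y ↔ DAdj A x y := or_comm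

variable [Fintype V] {A : V → V → Prop} {x y z : V}

/-- A pair of distinct nonadjacent vertices violating Meyniel's condition
`d(x) + d(y) ≥ 2n - 1`, which is stated here without truncated subtraction. -/
structure IsBadPair (A : V → V → Prop) (x y : V) : Prop where
  ne : x ≠ y
  not_dAdj : ¬ DAdj A x y
  deg_add_deg_le : deg A x + deg A y + 2 ≤ 2 * Fintype.card V

lemma IsBadPair.symm (h : IsBadPair A x y) : IsBadPair A y x :=
  ⟨h.ne.symm, fun hadj => h.not_dAdj hadj.symm, by have := h.deg_add_deg_le; omega⟩

lemma IsBadPair.flip (h : IsBadPair A x y) : IsBadPair (flip A) x y :=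
  ⟨h.ne, dAdj_flip.not.2 h.not_dAdj, by simpa only [deg_flip] using h.deg_add_deg_le⟩

lemma CondA0.flip (h : CondA0 A Set.univ) : CondA0 (flip A) Set.univ := by
  intro x hx y hy z hz hxy hxz hyz hadj
  rw [deg_flip, deg_flip]
  exact (h x hx y hy z hz hxy hxz hyz (dAdj_flip.not.1 hadj)).symm

lemma CondA0.le_of_not_out (hA0 : CondA0 A Set.univ) (hxy : IsBadPair A x y) (hzx : z ≠ x)
    (hzy : z ≠ y) (h : ¬ A x z) :
    3 * Fintype.card V ≤ deg A x + deg A y + outDeg A x + inDeg A z + 2 :=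
  Nat.sub_le_iff_le_add.1
    ((hA0 x trivial y trivial z trivial hxy.ne hzx.symm hzy.symm hxy.not_dAdj).1 h)

lemma CondA0.le_of_not_in (hA0 : CondA0 A Set.univ) (hxy : IsBadPair A x y) (hzx : z ≠ x)
    (hzy : z ≠ y) (h : ¬ A z x) :
    3 * Fintype.card V ≤ deg A x + deg A y + inDeg A x + outDeg A z + 2 := by
  have hle := hA0.flip.le_of_not_out hxy.flip hzx hzy h
  rw [deg_flip, deg_flip] at hle
  exact hle

lemma CondA0.le_of_not_dAdj (hA0 : CondA0 A Set.univ) (hxy : IsBadPair A x y) (hzx : z ≠ x)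
    (hzy : z ≠ y) (h : ¬ DAdj A x z) :
    6 * Fintype.card V ≤ 3 * deg A x + 2 * deg A y + deg A z + 4 := by
  have hout := hA0.le_of_not_out hxy hzx hzy fun hxz => h (.inl hxz)
  have hin := hA0.le_of_not_in hxy hzx hzy fun hzx => h (.inr hzx)
  have hdx : deg A x = outDeg A x + inDeg A x := rfl
  have hdz : deg A z = outDeg A z + inDeg A z := rfl
  omega

lemma IsBadPair.unique (hA0 : CondA0 A Set.univ) (hxy : IsBadPair A x y)
    (hxz : IsBadPair A x z) : y = z := by
  by_contra hyz
  have hle := hA0.le_of_not_dAdj hxy hxz.ne.symm (Ne.symm hyz) hxz.not_dAdj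
  have hdy := hxy.deg_add_deg_le
  have hdz := hxz.deg_add_deg_le
  have : 0 < Fintype.card V := Fintype.card_pos_iff.2 ⟨x⟩
  omega

end BadPairs

section Detours

/-- Reachability through vertices of `S` only. -/
def ReachIn (A : V → V → Prop) (S : Set V) : V → V → Prop :=
  Relation.ReflTransGen fun a b => A a b ∧ a ∈ S ∧ b ∈ S

/-- There is a path with at least one arc from `u` to `z` whose vertices before `z` lie in `S`. -/
def ExitsTo (A : V → V → Prop) (S : Set V) (u z : V) : Prop :=
  ∃ x ∈ S, ReachIn A S u x ∧ A x z

/-- There is a path with at least one arc from `z` to `u` whose vertices after `z` lie in `S`. -/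
def EntersFrom (A : V → V → Prop) (S : Set V) (u z : V) : Prop :=
  ∃ x ∈ S, A z x ∧ ReachIn A S x u

variable {A : V → V → Prop}

lemma ReachIn.exists_path {S : Set V} {a b : V} (h : ReachIn A S a b) (hb : b ∈ S) :
    ∃ X, IsPathFromTo A X a b ∧ ∀ x ∈ X, x ∈ S := by
  induction h using Relation.ReflTransGen.head_induction_on with
  | refl => exact ⟨[b], isPathFromTo_singleton A b, by simpa using hb⟩
  | @head a c hac _ ih =>
    obtain ⟨X, ⟨⟨-, hn, hchain⟩, hc, hb⟩, hS⟩ := ih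
    by_cases haX : a ∈ X
    · obtain ⟨X₁, X₂, rfl⟩ := List.append_of_mem haX
      refine ⟨a :: X₂, ⟨⟨by simp, hn.of_append_right, hchain.right_of_append⟩, rfl, ?_⟩,
        fun x hx => hS x (List.mem_append_right X₁ hx)⟩
      simpa [List.getLast?_append, List.getLast?_cons] using hb
    · refine ⟨a :: X, ⟨⟨by simp, List.nodup_cons.2 ⟨haX, hn⟩, ?_⟩, rfl, ?_⟩,
        List.forall_mem_cons.2 ⟨hac.2.1, hS⟩⟩
      · exact List.isChain_cons.2 ⟨by simpa [hc] using hac.1, hchain⟩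
      · simp [List.getLast?_cons, hb]

lemma exists_exitsTo {S : Set V} {u c : V} (h : Relation.ReflTransGen A u c) (hu : u ∈ S)
    (hc : c ∉ S) : ∃ z, z ∉ S ∧ ExitsTo A S u z := by
  induction h using Relation.ReflTransGen.head_induction_on with
  | refl => exact absurd hu hc
  | @head a b hab _ ih =>
    by_cases hb : b ∈ S
    · obtain ⟨z, hz, x, hx, hbx, hxz⟩ := ih hb
      exact ⟨z, hz, x, hx, hbx.head ⟨hab, hu, hb⟩, hxz⟩
    · exact ⟨b, hb, a, hu, .refl, hab⟩

lemma exists_entersFrom {S : Set V} {u c : V} (h : Relation.ReflTransGen A c u) (hu : u ∈ S)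
    (hc : c ∉ S) : ∃ z, z ∉ S ∧ EntersFrom A S u z := by
  induction h with
  | refl => exact absurd hu hc
  | @tail a b _ hab ih =>
    by_cases ha : a ∈ S
    · obtain ⟨z, hz, x, hx, hzx, hxa⟩ := ih ha
      exact ⟨z, hz, x, hx, hzx, hxa.tail ⟨hab, ha, hu⟩⟩
    · exact ⟨a, ha, b, hu, hab, .refl⟩

/-- The cycle `l` splits into a segment `B` from `s` to `t` and a gap `G` such that a walk through
`u` off the cycle leads from `t` back to `s`. -/
structure IsDetour (A : V → V → Prop) (l : List V) (u : V) (B G : List V) (s t : V) : Prop where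
  isRotated : B ++ G ~r l
  isPath : IsPathFromTo A B s t
  exitsTo : ExitsTo A {v | v ∉ l} u s
  entersFrom : EntersFrom A {v | v ∉ l} u t

/-- A detour whose gap is minimal: no vertex of the gap can be an end of a detour through `u`. -/
structure IsTightDetour (A : V → V → Prop) (l : List V) (u : V) (B G : List V) (s t : V) : Prop
    extends IsDetour A l u B G s t where
  not_exitsTo : ∀ g ∈ G, ¬ ExitsTo A {v | v ∉ l} u g
  not_entersFrom : ∀ g ∈ G, ¬ EntersFrom A {v | v ∉ l} u g

/-- The path `p` from `s` to `t` arises from the path `B` by inserting vertices of `G`. -/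
structure IsInsertion (A : V → V → Prop) (B G : List V) (s t : V) (p : List V) : Prop where
  isPath : IsPathFromTo A p s t
  sublist : B.Sublist p
  subset : p ⊆ B ++ G

variable {l B G p : List V} {s t u w y z : V}

lemma IsCycleOn.isPathFromTo_of_isRotated_append (hl : IsCycleOn A l) (hrot : B ++ G ~r l)
    (hs : B.head? = some s) (ht : B.getLast? = some t) : IsPathFromTo A B s t := by
  obtain ⟨-, hn, hchain, -⟩ := hl.of_isRotated hrot
  refine ⟨⟨?_, hn.of_append_left, hchain.left_of_append⟩, hs, ht⟩
  rintro rfl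
  simp at hs

lemma IsCycleOn.exists_isDetour (hl : IsCycleOn A l) (hconn : StronglyConnected A) (hu : u ∉ l) :
    ∃ B G s t, IsDetour A l u B G s t := by
  obtain ⟨c, hc⟩ := List.exists_mem_of_ne_nil l hl.ne_nil
  obtain ⟨s, hs, hus⟩ := exists_exitsTo (hconn.reflTransGen u c) (S := {v | v ∉ l}) hu (by simpa)
  obtain ⟨t, ht, htu⟩ := exists_entersFrom (hconn.reflTransGen c u) (S := {v | v ∉ l}) hu
    (by simpa)
  obtain ⟨B, G, hrot, hBs, hBt⟩ := exists_isRotated_append_of_mem (not_not.1 hs) (not_not.1 ht)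
  exact ⟨B, G, s, t, hrot, hl.isPathFromTo_of_isRotated_append hrot hBs hBt, hus, htu⟩

lemma IsDetour.exists_isTightDetour (h : IsDetour A l u B G s t) (hl : IsCycleOn A l) :
    ∃ B' G' s' t', IsTightDetour A l u B' G' s' t' ∧ G' ⊆ G := by
  obtain ⟨B', G', s', t', hrot, hsub, hs', hus', ht', htu', hG'⟩ :=
    exists_isRotated_append_forall_not h.isPath.2.1 h.exitsTo h.isPath.2.2 h.entersFrom
  have hrot' := hrot.trans h.isRotated
  exact ⟨B', G', s', t', ⟨⟨hrot', hl.isPathFromTo_of_isRotated_append hrot' hs' ht', hus', htu'⟩,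
    fun g hg => (hG' g hg).1, fun g hg => (hG' g hg).2⟩, hsub⟩

lemma IsDetour.exists_path (h : IsDetour A l u B G s t) :
    ∃ X x z, IsPathFromTo A X x z ∧ (∀ v ∈ X, v ∉ l) ∧ A t x ∧ A z s := by
  obtain ⟨z, hz, huz, hzs⟩ := h.exitsTo
  obtain ⟨x, -, htx, hxu⟩ := h.entersFrom
  obtain ⟨X, hX, hXl⟩ := ReachIn.exists_path (hxu.trans huz) hz
  exact ⟨X, x, z, hX, hXl, htx, hzs⟩

lemma IsTightDetour.of_reachIn (h : IsTightDetour A l u B G s t)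
    (huw : ReachIn A {v | v ∉ l} u w) (hwu : ReachIn A {v | v ∉ l} w u) :
    IsTightDetour A l w B G s t where
  isRotated := h.isRotated
  isPath := h.isPath
  exitsTo := h.exitsTo.imp fun _ hx => ⟨hx.1, hwu.trans hx.2.1, hx.2.2⟩
  entersFrom := h.entersFrom.imp fun _ hx => ⟨hx.1, hx.2.1, hx.2.2.trans huw⟩
  not_exitsTo g hg := fun ⟨x, hx, hwx, hxg⟩ => h.not_exitsTo g hg ⟨x, hx, huw.trans hwx, hxg⟩
  not_entersFrom g hg := fun ⟨x, hx, hgx, hxw⟩ =>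
    h.not_entersFrom g hg ⟨x, hx, hgx, hxw.trans hwu⟩

lemma IsTightDetour.not_dAdj (h : IsTightDetour A l u B G s t) (hu : u ∉ l) {g : V}
    (hg : g ∈ G) : ¬ DAdj A u g := by
  rintro (hug | hgu)
  · exact h.not_exitsTo g hg ⟨u, hu, .refl, hug⟩
  · exact h.not_entersFrom g hg ⟨u, hu, hgu, .refl⟩

lemma IsInsertion.insert (h : IsInsertion A B G s t p) (hzG : z ∈ G) (hzp : z ∉ p)
    (hz : CanInsert A p z) : ∃ p', IsInsertion A B G s t p' ∧ p.length < p'.length := by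
  obtain ⟨l₁, a, b, l₂, rfl, haz, hzb⟩ := canInsert_iff_exists_append.1 hz
  obtain ⟨⟨⟨-, hn, hchain⟩, hs, ht⟩, hsub, hmem⟩ := h
  have hperm : (l₁ ++ a :: z :: b :: l₂).Perm (z :: (l₁ ++ a :: b :: l₂)) := by
    simpa using List.perm_middle (l₁ := l₁ ++ [a]) (a := z) (l₂ := b :: l₂)
  refine ⟨l₁ ++ a :: z :: b :: l₂, ⟨⟨⟨by simp, ?_, ?_⟩, ?_, ?_⟩, ?_, ?_⟩, by simp⟩
  · exact hperm.nodup_iff.2 (List.nodup_cons.2 ⟨hzp, hn⟩)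
  · change List.IsChain A _ at hchain
    change List.IsChain A _
    simp only [List.isChain_append, List.isChain_cons_cons, List.head?_cons] at hchain ⊢
    tauto
  · simpa [List.head?_append] using hs
  · simpa [List.getLast?_append, List.getLast?_cons_cons] using ht
  · exact hsub.trans (by simp)
  · exact fun x hx => (List.mem_cons.1 (hperm.mem_iff.1 hx)).elim
      (fun hxz => hxz ▸ List.mem_append_right B hzG) fun hx => hmem hx

lemma exists_isInsertion_forall_not_canInsert [Finite V] (hB : IsPathFromTo A B s t) :
    ∃ p, IsInsertion A B G s t p ∧ ∀ z ∈ G, z ∉ p → ¬ CanInsert A p z := by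
  obtain ⟨p, hp, hmax⟩ := exists_forall_length_le (p := IsInsertion A B G s t)
    (fun _ hp => hp.isPath.1.2.1) ⟨B, hB, .refl B, List.subset_append_left B G⟩
  refine ⟨p, hp, fun z hzG hzp hz => ?_⟩
  obtain ⟨p', hp', hlt⟩ := hp.insert hzG hzp hz
  exact hlt.not_ge (hmax p' hp')

lemma IsInsertion.pairwise (h : IsInsertion A B G s t p) {R : V → V → Prop}
    (hG : ∀ g ∈ G, ∀ v, R g v ∧ R v g) (hB : B.Pairwise R) : p.Pairwise R := by
  classical
  have hfilter : B = p.filter (· ∈ B) := by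
    refine List.Sublist.eq_of_length_le ?_ (List.Subperm.length_le
      (List.subperm_of_subset (h.isPath.1.2.1.filter _) fun v hv => by simp_all))
    have hsub := h.sublist.filter (· ∈ B)
    rwa [List.filter_eq_self.2 (by simp)] at hsub
  rw [hfilter, List.pairwise_filter] at hB
  refine hB.imp_of_mem fun {a b} ha hb hab => ?_
  by_cases haB : a ∈ B
  · by_cases hbB : b ∈ B
    · exact hab (by simpa using haB) (by simpa using hbB)
    · exact (hG b ((List.mem_append.1 (h.subset hb)).resolve_left hbB) a).2
  · exact (hG a ((List.mem_append.1 (h.subset ha)).resolve_left haB) b).1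

lemma IsInsertion.mem_of_dAdj (hins : IsInsertion A B G s t p) (h : IsTightDetour A l u B G s t)
    (hu : u ∉ l) {v : V} (hv : v ∈ p) (huv : DAdj A u v) : v ∈ B :=
  (List.mem_append.1 (hins.subset hv)).resolve_right fun hvG => h.not_dAdj hu hvG huv

end Detours

section OffCycle

variable {A : V → V → Prop} {l B G p : List V} {s t u w y q : V}

lemma IsTightDetour.inCount_add_outCount_le (h : IsTightDetour A l w B G s t)
    (hl : IsLongestCycle A l) (hw : w ∉ l) (hp : IsInsertion A B G s t p) :
    inCount A w p + outCount A w p ≤ p.length + 1 := by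
  classical
  have hin : inCount A w p ≤ inCount A w B := countP_le_countP_of_nodup hp.isPath.1.2.1
    fun _ hv hvw => hp.mem_of_dAdj h hw hv (.inr hvw)
  have hout : outCount A w p ≤ outCount A w B := countP_le_countP_of_nodup hp.isPath.1.2.1
    fun _ hv hwv => hp.mem_of_dAdj h hw hv (.inl hwv)
  have hB := inCount_add_outCount_le_of_not_canInsert (hl.not_canInsert h.isRotated hw)
  have hlen := hp.sublist.length_le
  omega

/- An arc from `w` to a vertex of `G`, or a path of length two from `w` to `q` whose middle vertex
lies off the cycle, would contradict tightness, and so would their reversals. -/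
lemma IsTightDetour.deg_counts_add_four_le (hirr : ∀ v, ¬ A v v)
    (h : IsTightDetour A l w B G s t) (hw : w ∉ l) (hq : q ∈ G) (hql : q ∈ l) {T : List V}
    (hT : ∀ x ∈ T, x ∈ l → x ∈ G) (hwT : w ∈ T) (hqT : q ∈ T) :
    (inCount A w T + outCount A w T) + (inCount A q T + outCount A q T) + 4 ≤ 2 * T.length := by
  classical
  have hwq : w ≠ q := by rintro rfl; exact hw hql
  have hadj := h.not_dAdj hw hq
  have hout : outCount A w T + inCount A q T + 2 ≤ T.length := by
    refine countP_add_countP_add_two_le (fun x hx ⟨hwx, hxq⟩ => ?_) hwT hqT hwq (hirr w)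
      (fun hwq => hadj (.inl hwq)) (fun hwq => hadj (.inl hwq)) (hirr q)
    by_cases hxl : x ∈ l
    · exact h.not_dAdj hw (hT x hx hxl) (.inl hwx)
    · exact h.not_exitsTo q hq ⟨x, hxl, .single ⟨hwx, hw, hxl⟩, hxq⟩
  have hin : inCount A w T + outCount A q T + 2 ≤ T.length := by
    refine countP_add_countP_add_two_le (fun x hx ⟨hxw, hqx⟩ => ?_) hwT hqT hwq (hirr w)
      (fun hqw => hadj (.inr hqw)) (fun hqw => hadj (.inr hqw)) (hirr q)
    by_cases hxl : x ∈ l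
    · exact h.not_dAdj hw (hT x hx hxl) (.inr hxw)
    · exact h.not_entersFrom q hq ⟨x, hxl, hqx, .single ⟨hxw, hxl, hw⟩⟩
  omega

lemma IsLongestCycle.exists_isTightDetour (hl : IsLongestCycle A l) (hconn : StronglyConnected A)
    (hu : u ∉ l) : ∃ B G s t, IsTightDetour A l u B G s t := by
  obtain ⟨_, _, _, _, hdetour⟩ := hl.1.exists_isDetour hconn hu
  obtain ⟨B, G, s, t, htight, -⟩ := hdetour.exists_isTightDetour hl.1
  exact ⟨B, G, s, t, htight⟩

/- If all of `G` could be inserted into `B`, closing up through `u` would give a longer cycle. -/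
lemma IsDetour.exists_mem_not_mem (h : IsDetour A l u B G s t) (hl : IsLongestCycle A l)
    (hp : IsInsertion A B G s t p) : ∃ y ∈ G, y ∉ p := by
  by_contra! hGp
  obtain ⟨X, x, z, hX, hXl, htx, hzs⟩ := h.exists_path
  have hmem : ∀ v, v ∈ p ↔ v ∈ l := fun v => by
    rw [← h.isRotated.perm.mem_iff]
    exact ⟨fun hvp => hp.subset hvp, fun hv => (List.mem_append.1 hv).elim
      (fun hvB => hp.sublist.subset hvB) (hGp v)⟩
  have hperm : p.Perm l := (List.perm_ext_iff_of_nodup hp.isPath.1.2.1 hl.1.2.1).2 hmem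
  exact hl.not_perm_append hX.1.1
    (hp.isPath.isCycleOn_append hX (fun v hvp hvX => hXl v hvX ((hmem v).1 hvp)) htx hzs)
    (hperm.append_right X)

variable [Fintype V]

lemma IsTightDetour.isBadPair (hirr : ∀ v, ¬ A v v) (h : IsTightDetour A l w B G s t)
    (hl : IsLongestCycle A l) (hw : w ∉ l) (hp : IsInsertion A B G s t p) (hq : q ∈ G)
    (hqp : q ∉ p) (hins : ¬ CanInsert A p q) : IsBadPair A w q := by
  have hmem : ∀ x, x ∈ l ↔ x ∈ B ++ G := fun x => h.isRotated.perm.mem_iff.symm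
  have hql : q ∈ l := (hmem q).2 (List.mem_append_right B hq)
  obtain ⟨T, hT⟩ := exists_isEnumeration_append hp.isPath.1.2.1
  have hdisj : ∀ x ∈ T, x ∉ p := fun x hxT hxp => (List.nodup_append'.1 hT.1).2.2 hxp hxT
  have hTG : ∀ x ∈ T, x ∈ l → x ∈ G := fun x hxT hxl =>
    (List.mem_append.1 ((hmem x).1 hxl)).resolve_left fun hxB =>
      hdisj x hxT (hp.sublist.subset hxB)
  have hwp : w ∉ p := fun hwp => hw ((hmem w).2 (hp.subset hwp))
  refine ⟨by rintro rfl; exact hw hql, h.not_dAdj hw hq, ?_⟩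
  have hwcount := h.inCount_add_outCount_le hl hw hp
  have hqcount := inCount_add_outCount_le_of_not_canInsert hins
  have hTcount := h.deg_counts_add_four_le hirr hw hq hql hTG
    ((List.mem_append.1 (hT.2 w)).resolve_left hwp) ((List.mem_append.1 (hT.2 q)).resolve_left hqp)
  rw [hT.deg_eq, hT.deg_eq, ← hT.length_eq_card, List.length_append]
  simp only [outCount_append, inCount_append]
  omega

/- Exactly one vertex of `G` is left over, as two of them would both form bad pairs with `u`. -/
lemma IsTightDetour.exists_isInsertion_isBadPair (hirr : ∀ v, ¬ A v v)
    (hA0 : CondA0 A Set.univ) (h : IsTightDetour A l u B G s t) (hl : IsLongestCycle A l)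
    (hu : u ∉ l) :
    ∃ p y, IsInsertion A B G s t p ∧ y ∈ G ∧ (p ++ [y]).Perm l ∧
      ∀ w, w ∉ l → ReachIn A {v | v ∉ l} u w → ReachIn A {v | v ∉ l} w u → IsBadPair A w y := by
  obtain ⟨p, hp, hmax⟩ := exists_isInsertion_forall_not_canInsert (G := G) h.isPath
  have hbad : ∀ q ∈ G, q ∉ p → ∀ w, w ∉ l → ReachIn A {v | v ∉ l} u w →
      ReachIn A {v | v ∉ l} w u → IsBadPair A w q := fun q hq hqp w hw huw hwu =>
    (h.of_reachIn huw hwu).isBadPair hirr hl hw hp hq hqp (hmax q hq hqp)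
  obtain ⟨y, hy, hyp⟩ := h.exists_mem_not_mem hl hp
  have hnodup : (p ++ [y]).Nodup :=
    (List.perm_append_singleton y p).nodup_iff.2 (List.nodup_cons.2 ⟨hyp, hp.isPath.1.2.1⟩)
  refine ⟨p, y, hp, hy, (List.perm_ext_iff_of_nodup hnodup hl.1.2.1).2 fun v => ?_, hbad y hy hyp⟩
  rw [← h.isRotated.perm.mem_iff, List.mem_append, List.mem_singleton]
  constructor
  · rintro (hvp | rfl)
    exacts [hp.subset hvp, List.mem_append_right B hy]
  · intro hv
    refine or_iff_not_imp_left.2 fun hvp => ?_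
    have hvG := (List.mem_append.1 hv).resolve_left fun hvB => hvp (hp.sublist.subset hvB)
    exact IsBadPair.unique hA0 (hbad v hvG hvp u hu .refl .refl) (hbad y hy hyp u hu .refl .refl)

lemma IsLongestCycle.exists_isBadPair (hirr : ∀ v, ¬ A v v) (hA0 : CondA0 A Set.univ)
    (hconn : StronglyConnected A) (hl : IsLongestCycle A l) (hu : u ∉ l) :
    ∃ y ∈ l, ∀ w, w ∉ l → ReachIn A {v | v ∉ l} u w → ReachIn A {v | v ∉ l} w u →
      IsBadPair A w y := by
  obtain ⟨B, G, s, t, htight⟩ := hl.exists_isTightDetour hconn hu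
  obtain ⟨p, y, -, -, hperm, hbad⟩ := htight.exists_isInsertion_isBadPair hirr hA0 hl hu
  exact ⟨y, hperm.subset (by simp), hbad⟩

lemma IsLongestCycle.eq_of_reachIn (hirr : ∀ v, ¬ A v v) (hA0 : CondA0 A Set.univ)
    (hconn : StronglyConnected A) (hl : IsLongestCycle A l) (hu : u ∉ l) (hw : w ∉ l)
    (huw : ReachIn A {v | v ∉ l} u w) (hwu : ReachIn A {v | v ∉ l} w u) : u = w := by
  obtain ⟨y, -, hbad⟩ := hl.exists_isBadPair hirr hA0 hconn hu
  exact (hbad u hu .refl .refl).symm.unique hA0 (hbad w hw huw hwu).symm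

lemma IsLongestCycle.outDeg_add_inDeg_add_two_le (hl : IsLongestCycle A l) {X : List V}
    {a b c d : V} (hX : IsPathFromTo A X a b) (hXl : ∀ v ∈ X, v ∉ l)
    (hba : ∀ x, x ∉ l → ¬ (A b x ∧ A x a)) (hc : c ∉ l) (hd : d ∉ l) (hcd : c ≠ d)
    (hbc : ¬ A b c) (hca : ¬ A c a) (hbd : ¬ A b d) (hda : ¬ A d a) :
    outDeg A b + inDeg A a + 2 ≤ Fintype.card V := by
  classical
  obtain ⟨T, hT⟩ := exists_isEnumeration_append hl.1.2.1
  have hmem : ∀ x, x ∉ l → x ∈ T := fun x hx => (List.mem_append.1 (hT.2 x)).resolve_left hx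
  have hoff : outCount A b T + inCount A a T + 2 ≤ T.length :=
    countP_add_countP_add_two_le
      (fun x hxT => hba x fun hxl => (List.nodup_append'.1 hT.1).2.2 hxl hxT)
      (hmem c hc) (hmem d hd) hcd hbc hca hbd hda
  have hon := hl.inCount_add_outCount_le hX fun v hv hvX => hXl v hvX hv
  rw [hT.outDeg_eq, hT.inDeg_eq, ← hT.length_eq_card, List.length_append, outCount_append,
    inCount_append]
  omega

lemma IsLongestCycle.not_arc_of_arc (hirr : ∀ v, ¬ A v v) (hA0 : CondA0 A Set.univ)
    (hconn : StronglyConnected A) (hl : IsLongestCycle A l) (hu : u ∉ l) (hw : w ∉ l)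
    (huw : A u w) : ¬ A w u := fun hwu => by
  obtain rfl := hl.eq_of_reachIn hirr hA0 hconn hu hw (.single ⟨huw, hu, hw⟩)
    (.single ⟨hwu, hw, hu⟩)
  exact hirr u huw

lemma IsLongestCycle.outDeg_add_inDeg_add_two_le_of_arc (hirr : ∀ v, ¬ A v v)
    (hA0 : CondA0 A Set.univ) (hconn : StronglyConnected A) (hl : IsLongestCycle A l)
    (hu : u ∉ l) (hw : w ∉ l) (huw : A u w) :
    outDeg A w + inDeg A u + 2 ≤ Fintype.card V := by
  have hne : u ≠ w := by rintro rfl; exact hirr u huw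
  have hwu := hl.not_arc_of_arc hirr hA0 hconn hu hw huw
  refine hl.outDeg_add_inDeg_add_two_le (isPathFromTo_pair huw hne) (by simp [hu, hw])
    (fun x hx ⟨hwx, hxu⟩ => hne ?_) hu hw hne hwu (hirr u) (hirr w) hwu
  exact hl.eq_of_reachIn hirr hA0 hconn hu hw (.single ⟨huw, hu, hw⟩)
    (.tail (.single ⟨hwx, hw, hx⟩) ⟨hxu, hx, hu⟩)

lemma IsLongestCycle.deg_add_two_le_of_not_dAdj (hirr : ∀ v, ¬ A v v)
    (hA0 : CondA0 A Set.univ) (hconn : StronglyConnected A) (hl : IsLongestCycle A l)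
    (hu : u ∉ l) (hw : w ∉ l) (hne : u ≠ w) (huw : ¬ DAdj A u w) :
    deg A u + 2 ≤ Fintype.card V :=
  hl.outDeg_add_inDeg_add_two_le (isPathFromTo_singleton A u) (by simpa using hu)
    (fun _ hx ⟨hux, hxu⟩ => hl.not_arc_of_arc hirr hA0 hconn hu hx hux hxu) hu hw hne (hirr u)
    (hirr u) (fun h => huw (.inl h)) (fun h => huw (.inr h))

/- Two vertices off the cycle span at most one arc; A0, applied to the bad pair containing one of
them, makes a degree sum too large in each case. -/
lemma IsLongestCycle.eq_of_not_mem (hirr : ∀ v, ¬ A v v) (hA0 : CondA0 A Set.univ)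
    (hconn : StronglyConnected A) (hl : IsLongestCycle A l) (hu : u ∉ l) (hw : w ∉ l) :
    w = u := by
  obtain ⟨y, hyl, hbad⟩ := hl.exists_isBadPair hirr hA0 hconn hu
  have huy := hbad u hu .refl .refl
  have hdeg := huy.deg_add_deg_le
  by_contra hwu
  have hwy : w ≠ y := by rintro rfl; exact hw hyl
  by_cases huw : A u w
  · have hle := hA0.le_of_not_in huy hwu hwy (hl.not_arc_of_arc hirr hA0 hconn hu hw huw)
    have := hl.outDeg_add_inDeg_add_two_le_of_arc hirr hA0 hconn hu hw huw
    omega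
  by_cases hwu' : A w u
  · have hle := hA0.le_of_not_out huy hwu hwy huw
    have := hl.outDeg_add_inDeg_add_two_le_of_arc hirr hA0 hconn hw hu hwu'
    omega
  have hnot : ¬ DAdj A u w := not_or.2 ⟨huw, hwu'⟩
  have hle := hA0.le_of_not_dAdj huy hwu hwy hnot
  have := hl.deg_add_two_le_of_not_dAdj hirr hA0 hconn hu hw (Ne.symm hwu) hnot
  have := hl.deg_add_two_le_of_not_dAdj hirr hA0 hconn hw hu hwu fun h => hnot h.symm
  omega

end OffCycle

section Splittings

/-- On the list `p`, out-neighbours of `x` weakly precede in-neighbours of `x`: no in-neighbour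
comes strictly before an out-neighbour. -/
def OutsPrecedeIns (A : V → V → Prop) (x : V) (p : List V) : Prop :=
  p.Pairwise fun a b => ¬ (A a x ∧ A x b)

/-- A bad pair `u`, `y` together with a path `p` through all other vertices, on which the
out-neighbours of `u` and of `y` weakly precede the respective in-neighbours. -/
structure IsSplitting [Fintype V] (A : V → V → Prop) (u y : V) (p : List V) : Prop where
  isBadPair : IsBadPair A u y
  isChain : p.IsChain A
  isEnumeration : IsEnumeration (u :: y :: p)
  outsPrecedeIns_left : OutsPrecedeIns A u p
  outsPrecedeIns_right : OutsPrecedeIns A y p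

/-- The number of nonadjacencies between `u` or `y` and the vertices of `p`. -/
noncomputable def defect (A : V → V → Prop) (u y : V) (p : List V) : ℕ :=
  nonadjCount A u p + nonadjCount A y p

variable {A : V → V → Prop} {u y z : V} {p : List V}

lemma OutsPrecedeIns.reverse (h : OutsPrecedeIns A u p) : OutsPrecedeIns (flip A) u p.reverse :=
  List.pairwise_reverse.2 (h.imp fun hab hba => hab hba.symm)

lemma OutsPrecedeIns.outCount_add_inCount_add_nonadjCount_le (h : OutsPrecedeIns A u p) :
    outCount A u p + inCount A u p + nonadjCount A u p ≤ p.length + 1 := by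
  classical
  have hboth := countP_and_le_one_of_pairwise h
  have hsplit := countP_or_add_countP_and_not (P := fun v => A v u) (Q := A u) p
  have hadd := countP_add_countP_eq_or_add_and (P := fun v => A v u) (Q := A u) p
  have hnonadj : nonadjCount A u p = p.countP fun v => ¬ A v u ∧ ¬ A u v :=
    List.countP_congr fun v _ => by simp [DAdj, and_comm]
  unfold outCount inCount
  omega

lemma nonadjCount_flip_reverse (x : V) (p : List V) :
    nonadjCount (flip A) x p.reverse = nonadjCount A x p := by
  rw [nonadjCount, nonadjCount, List.countP_reverse]
  exact List.countP_congr fun v _ => by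
    simpa only [decide_eq_true_eq] using not_congr dAdj_flip

lemma defect_flip_reverse (u y : V) (p : List V) :
    defect (flip A) u y p.reverse = defect A u y p :=
  congrArg₂ (· + ·) (nonadjCount_flip_reverse u p) (nonadjCount_flip_reverse y p)

lemma defect_comm (u y : V) (p : List V) : defect A u y p = defect A y u p := add_comm _ _

variable [Fintype V]

lemma inDeg_add_two_le_card (hzz : ¬ A z z) (hne : u ≠ z) (huz : ¬ A u z) :
    inDeg A z + 2 ≤ Fintype.card V := by
  have hsub : {v | A v z} ⊆ ({u, z} : Set V)ᶜ := by
    rintro v hv (rfl | rfl)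
    exacts [huz hv, hzz hv]
  have hle := Set.ncard_le_ncard hsub
  have hcompl := Set.ncard_add_ncard_compl ({u, z} : Set V)
  rw [Set.ncard_pair hne, Nat.card_eq_fintype_card] at hcompl
  unfold inDeg
  omega

namespace IsSplitting

lemma symm (h : IsSplitting A u y p) : IsSplitting A y u p where
  isBadPair := h.isBadPair.symm
  isChain := h.isChain
  isEnumeration := h.isEnumeration.of_perm (List.Perm.swap u y p)
  outsPrecedeIns_left := h.outsPrecedeIns_right
  outsPrecedeIns_right := h.outsPrecedeIns_left

lemma reverse (h : IsSplitting A u y p) : IsSplitting (flip A) u y p.reverse where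
  isBadPair := h.isBadPair.flip
  isChain := List.isChain_reverse.2 h.isChain
  isEnumeration := h.isEnumeration.of_perm (((List.reverse_perm p).cons y).cons u)
  outsPrecedeIns_left := h.outsPrecedeIns_left.reverse
  outsPrecedeIns_right := h.outsPrecedeIns_right.reverse

lemma length_add_two (h : IsSplitting A u y p) : p.length + 2 = Fintype.card V :=
  h.isEnumeration.length_eq_card

lemma outDeg_eq (hirr : ∀ v, ¬ A v v) (h : IsSplitting A u y p) :
    outDeg A u = outCount A u p := by
  classical
  have huy : ¬ A u y := fun huy => h.isBadPair.not_dAdj (.inl huy)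
  rw [h.isEnumeration.outDeg_eq]
  simp [outCount, hirr u, huy]

lemma inDeg_eq (hirr : ∀ v, ¬ A v v) (h : IsSplitting A u y p) :
    inDeg A u = inCount A u p :=
  (h.reverse.outDeg_eq (A := flip A) hirr).trans List.countP_reverse

lemma ne_of_mem (h : IsSplitting A u y p) (hz : z ∈ p) : z ≠ u ∧ z ≠ y := by
  have hnodup := h.isEnumeration.1
  constructor <;> rintro rfl <;> simp_all

lemma deg_add_nonadjCount_lt (hirr : ∀ v, ¬ A v v) (h : IsSplitting A u y p) :
    deg A u + nonadjCount A u p < Fintype.card V := by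
  have hle := h.outsPrecedeIns_left.outCount_add_inCount_add_nonadjCount_le
  rw [← h.length_add_two, deg, h.outDeg_eq hirr, h.inDeg_eq hirr]
  omega

lemma le_outDeg_add_inDeg (hirr : ∀ v, ¬ A v v) (hA0 : CondA0 A Set.univ)
    (h : IsSplitting A u y p) (hz : z ∈ p) (huz : ¬ A u z) :
    Fintype.card V + defect A u y p ≤ outDeg A u + inDeg A z := by
  have hu := h.deg_add_nonadjCount_lt hirr
  have hy := h.symm.deg_add_nonadjCount_lt hirr
  have hle := hA0.le_of_not_out h.isBadPair (h.ne_of_mem hz).1 (h.ne_of_mem hz).2 huz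
  unfold defect
  omega

lemma le_inDeg_add_outDeg (hirr : ∀ v, ¬ A v v) (hA0 : CondA0 A Set.univ)
    (h : IsSplitting A u y p) (hz : z ∈ p) (hzu : ¬ A z u) :
    Fintype.card V + defect A u y p ≤ inDeg A u + outDeg A z := by
  rw [← defect_flip_reverse]
  exact h.reverse.le_outDeg_add_inDeg (A := flip A) hirr hA0.flip (List.mem_reverse.2 hz) hzu

lemma lt_deg (hirr : ∀ v, ¬ A v v) (hA0 : CondA0 A Set.univ) (h : IsSplitting A u y p)
    (hz : z ∈ p) (hadj : ¬ (DAdj A u z ∧ DAdj A y z)) :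
    Fintype.card V + defect A u y p < deg A z := by
  have hu := h.deg_add_nonadjCount_lt hirr
  have hy := h.symm.deg_add_nonadjCount_lt hirr
  obtain ⟨hzu, hzy⟩ := h.ne_of_mem hz
  unfold defect
  rcases not_and_or.1 hadj with hnot | hnot
  · have := hA0.le_of_not_dAdj h.isBadPair hzu hzy hnot
    omega
  · have := hA0.le_of_not_dAdj h.isBadPair.symm hzy hzu hnot
    omega

lemma exists_not_arc (hirr : ∀ v, ¬ A v v) (hA0 : CondA0 A Set.univ)
    (hn : 4 ≤ Fintype.card V) (h : IsSplitting A u y p) : ∃ z ∈ p, ¬ A u z := by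
  classical
  by_contra! hout
  have hinDeg : inDeg A u ≤ 1 := by
    rw [h.inDeg_eq hirr]
    refine le_of_eq_of_le (List.countP_congr fun v hv => ?_)
      (countP_and_le_one_of_pairwise h.outsPrecedeIns_left)
    simp [hout v hv]
  have hlen := h.length_add_two
  obtain ⟨a, b, q, rfl⟩ : ∃ a b q, p = a :: b :: q := by
    rcases p with _ | ⟨a, _ | ⟨b, q⟩⟩
    · rw [List.length_nil] at hlen
      omega
    · rw [List.length_singleton] at hlen
      omega
    · exact ⟨a, b, q, rfl⟩
  have hau : ¬ A a u := fun hau =>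
    List.rel_of_pairwise_cons h.outsPrecedeIns_left List.mem_cons_self ⟨hau, hout b (by simp)⟩
  have hle := h.le_inDeg_add_outDeg hirr hA0 List.mem_cons_self hau
  have hoa : outDeg A a + 2 ≤ Fintype.card V := inDeg_add_two_le_card (A := flip A) (hirr a)
    (h.ne_of_mem List.mem_cons_self).1.symm hau
  omega

lemma two_add_defect_le_outDeg (hirr : ∀ v, ¬ A v v) (hA0 : CondA0 A Set.univ)
    (hn : 4 ≤ Fintype.card V) (h : IsSplitting A u y p) : 2 + defect A u y p ≤ outDeg A u := by
  obtain ⟨z, hz, huz⟩ := h.exists_not_arc hirr hA0 hn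
  have hle := h.le_outDeg_add_inDeg hirr hA0 hz huz
  have hinDeg := inDeg_add_two_le_card (hirr z) (h.ne_of_mem hz).1.symm huz
  omega

lemma two_add_defect_le_inDeg (hirr : ∀ v, ¬ A v v) (hA0 : CondA0 A Set.univ)
    (hn : 4 ≤ Fintype.card V) (h : IsSplitting A u y p) : 2 + defect A u y p ≤ inDeg A u := by
  rw [← defect_flip_reverse]
  exact h.reverse.two_add_defect_le_outDeg (A := flip A) hirr hA0.flip hn

end IsSplitting

/- An in-neighbour of `u` before an out-neighbour of `u` would give a detour through `u` avoiding
only vertices of `B`, one of which would form a second bad pair with `u`. -/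
lemma IsLongestCycle.outsPrecedeIns (hirr : ∀ v, ¬ A v v) (hA0 : CondA0 A Set.univ)
    {l B G : List V} (hl : IsLongestCycle A l) (hrot : B ++ G ~r l) (hu : u ∉ l)
    (huy : IsBadPair A u y) (hy : y ∈ G) : OutsPrecedeIns A u B := by
  refine List.pairwise_iff_forall_sublist.2 fun {a b} hsub ⟨hau, hub⟩ => ?_
  obtain ⟨r₁, r₂, rfl, ha, hb⟩ := List.cons_sublist_iff.1 hsub
  obtain ⟨B₁, M₁, rfl⟩ := List.append_of_mem ha
  obtain ⟨M₂, B₂, rfl⟩ := List.append_of_mem (List.singleton_sublist.1 hb)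
  have hrot' : (b :: B₂ ++ G ++ B₁ ++ [a]) ++ (M₁ ++ M₂) ~r l := by
    refine .trans ?_ hrot
    simpa using List.isRotated_append (l := b :: B₂ ++ G) (l' := B₁ ++ a :: M₁ ++ M₂)
  have hdetour : IsDetour A l u (b :: B₂ ++ G ++ B₁ ++ [a]) (M₁ ++ M₂) b a :=
    ⟨hrot', hl.1.isPathFromTo_of_isRotated_append hrot' rfl List.getLast?_concat,
      ⟨u, hu, .refl, hub⟩, ⟨u, hu, hau, .refl⟩⟩
  obtain ⟨B', G', s', t', htight, hG'⟩ := hdetour.exists_isTightDetour hl.1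
  obtain ⟨-, y', -, hy', -, hbad⟩ := htight.exists_isInsertion_isBadPair hirr hA0 hl hu
  obtain rfl : y = y' := huy.unique hA0 (hbad u hu .refl .refl)
  have hnodup := hrot.perm.nodup_iff.2 hl.1.2.1
  refine (List.nodup_append'.1 hnodup).2.2 ?_ hy
  have := hG' hy'
  simp only [List.mem_append, List.mem_cons] at this ⊢
  tauto

lemma IsLongestCycle.exists_isSplitting (hirr : ∀ v, ¬ A v v) (hA0 : CondA0 A Set.univ)
    (hconn : StronglyConnected A) {l : List V} (hl : IsLongestCycle A l) (hu : u ∉ l) :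
    ∃ y p, IsSplitting A u y p := by
  have hall : ∀ {v}, v ∉ l → v = u := hl.eq_of_not_mem hirr hA0 hconn hu
  obtain ⟨B, G, s, t, h⟩ := hl.exists_isTightDetour hconn hu
  obtain ⟨p, y, hp, hy, hperm, hbad⟩ := h.exists_isInsertion_isBadPair hirr hA0 hl hu
  have huy := hbad u hu .refl .refl
  have henum : IsEnumeration (u :: y :: p) := by
    refine IsEnumeration.of_perm (l := u :: l) ⟨List.nodup_cons.2 ⟨hu, hl.1.2.1⟩, fun v => ?_⟩
      (((List.perm_append_singleton y p).symm.trans hperm).cons u)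
    exact List.mem_cons.2 (or_iff_not_imp_right.2 hall)
  have hcu : IsCycleOn A (p ++ [u]) := by
    obtain ⟨x, hx, -, hus⟩ := h.exitsTo
    obtain ⟨x', hx', htu, -⟩ := h.entersFrom
    obtain rfl := hall hx
    obtain rfl := hall hx'
    refine hp.isPath.isCycleOn_append (isPathFromTo_singleton A _) ?_ htu hus
    have := henum.1
    simp_all
  have hlu : IsLongestCycle A (p ++ [u]) := hl.of_length_eq hcu (by simpa using hperm.length_eq)
  have hyu : y ∉ p ++ [u] := by
    have := henum.1
    simp_all [eq_comm]
  exact ⟨y, p, huy, hp.isPath.1.2.2, henum,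
    hp.pairwise (fun g hg v => ⟨fun hgv => h.not_dAdj hu hg (.inr hgv.1),
      fun hvg => h.not_dAdj hu hg (.inl hvg.2)⟩)
      (hl.outsPrecedeIns hirr hA0 h.isRotated hu huy hy),
    hlu.outsPrecedeIns hirr hA0 (.refl _) hyu huy.symm (List.mem_singleton_self u)⟩

end Splittings

section Reinsertion

variable {A : V → V → Prop} {u y z f t : V} {p D₁ K D₂ Y Z : List V}

lemma length_le_defect (h : ∀ v ∈ p, ¬ (DAdj A u v ∧ DAdj A y v)) : p.length ≤ defect A u y p := by
  classical
  have hor : p.countP (fun v => ¬ DAdj A u v ∨ ¬ DAdj A y v) = p.length :=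
    List.countP_eq_length.2 fun v hv => decide_eq_true (not_and_or.1 (h v hv))
  have hadd := countP_add_countP_eq_or_add_and (P := fun v => ¬ DAdj A u v)
    (Q := fun v => ¬ DAdj A y v) p
  unfold defect nonadjCount
  omega

/- The cycle is `Z u (b ⋯ j) y (f ⋯ a)`, where `f` and `j` are the ends of `Y`. -/
lemma exists_isCycleOn_of_crossing {Y₁ Y₂ : List V} {a b : V}
    (hnodup : (u :: y :: (Y₁ ++ a :: b :: Y₂ ++ z :: Z)).Nodup)
    (hchain : (Y₁ ++ a :: b :: Y₂ ++ z :: Z).IsChain A)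
    (hyf : ∀ f ∈ (Y₁ ++ a :: b :: Y₂).head?, A y f)
    (hjy : ∀ j ∈ (Y₁ ++ a :: b :: Y₂).getLast?, A j y)
    (htu : ∀ t ∈ (z :: Z).getLast?, A t u) (haz : A a z) (hub : A u b) :
    ∃ c, IsCycleOn A c ∧ c.Perm (u :: y :: (Y₁ ++ a :: b :: Y₂ ++ z :: Z)) := by
  classical
  have hperm : ((y :: (Y₁ ++ [a])) ++ (z :: Z ++ u :: b :: Y₂)).Perm
      (u :: y :: (Y₁ ++ a :: b :: Y₂ ++ z :: Z)) := by
    rw [List.perm_iff_count]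
    intro v
    simp only [List.count_append, List.count_cons, List.count_nil]
    omega
  obtain ⟨hfirst, hlast, hdisj⟩ := List.nodup_append'.1 (hperm.nodup_iff.2 hnodup)
  obtain ⟨hY, hZ, -⟩ := List.isChain_append.1 hchain
  obtain ⟨j, hj⟩ : ∃ j, (b :: Y₂).getLast? = some j :=
    ⟨_, List.getLast?_eq_getLast_of_ne_nil (by simp)⟩
  have hfirstPath : IsPathFromTo A (y :: (Y₁ ++ [a])) y a := by
    refine ⟨⟨by simp, hfirst, List.isChain_cons.2 ⟨fun v hv => hyf v ?_, ?_⟩⟩, rfl,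
      List.getLast?_concat (l := y :: Y₁)⟩
    · simpa [List.head?_append] using hv
    · exact List.IsChain.left_of_append (l₂ := b :: Y₂) (by simpa using hY)
  have hlastPath : IsPathFromTo A (z :: Z ++ u :: b :: Y₂) z j := by
    refine ⟨⟨by simp, hlast, List.isChain_append.2 ⟨hZ, List.isChain_cons_cons.2 ⟨hub, ?_⟩, ?_⟩⟩,
      rfl, ?_⟩
    · exact (List.isChain_append.1 hY).2.1.tail
    · simpa using htu
    · rw [List.getLast?_append, List.getLast?_cons_cons, hj, Option.some_or]
  refine ⟨_, hfirstPath.isCycleOn_append hlastPath hdisj haz (hjy j ?_), hperm⟩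
  simpa [List.getLast?_append] using hj

/-- In the path `D₁ ++ K ++ D₂` of a splitting, `K` runs from `f` to `t`, the first and the last
vertex adjacent to both `u` and `y`. -/
structure IsCore (A : V → V → Prop) (u y : V) (D₁ K D₂ : List V) (f t : V) : Prop where
  head?_eq : K.head? = some f
  getLast?_eq : K.getLast? = some t
  left_first : A u f
  right_first : A y f
  last_left : A t u
  last_right : A t y
  not_dAdj_and_dAdj : ∀ v ∈ D₁ ++ D₂, ¬ (DAdj A u v ∧ DAdj A y v)
  length_le : (D₁ ++ D₂).length ≤ defect A u y (D₁ ++ K ++ D₂)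

lemma IsCore.symm (h : IsCore A u y D₁ K D₂ f t) : IsCore A y u D₁ K D₂ f t where
  head?_eq := h.head?_eq
  getLast?_eq := h.getLast?_eq
  left_first := h.right_first
  right_first := h.left_first
  last_left := h.last_right
  last_right := h.last_left
  not_dAdj_and_dAdj v hv := fun hadj => h.not_dAdj_and_dAdj v hv hadj.symm
  length_le := defect_comm u y _ ▸ h.length_le

variable [Fintype V]

/- A vertex missing from `c` has at most `2 * (D.length - 1)` arcs off the cycle, hence more than
`c.length` arcs with it. -/
lemma IsCycleOn.exists_hamiltonian (hirr : ∀ v, ¬ A v v) {c D : List V} (hc : IsCycleOn A c)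
    (hcD : IsEnumeration (c ++ D)) (hdeg : ∀ v ∈ D, Fintype.card V + D.length < deg A v) :
    ∃ l, IsCycleOn A l ∧ ∀ v, v ∈ l := by
  classical
  induction D generalizing c with
  | nil => exact ⟨c, hc, by simpa using hcD.2⟩
  | cons z D ih =>
    have hlong : c.length < inCount A z c + outCount A z c := by
      have hz := hdeg z List.mem_cons_self
      have hout : outCount A z (z :: D) ≤ D.length := by
        simpa [outCount, hirr z] using List.countP_le_length
      have hin : inCount A z (z :: D) ≤ D.length := by
        simpa [inCount, hirr z] using List.countP_le_length
      rw [hcD.deg_eq, outCount_append, inCount_append, ← hcD.length_eq_card] at hz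
      simp only [List.length_append, List.length_cons] at hz
      omega
    have hzc : z ∉ c := fun hzc => (List.nodup_append'.1 hcD.1).2.2 hzc List.mem_cons_self
    obtain ⟨c', hc', hperm⟩ := hc.exists_perm_append_of_length_lt (isPathFromTo_singleton A z)
      (by simpa using hzc) hlong
    refine ih hc' (hcD.of_perm (by simpa using hperm.append_right D)) fun v hv => ?_
    have := hdeg v (List.mem_cons_of_mem z hv)
    rw [List.length_cons] at this
    omega

namespace IsSplitting

lemma exists_dAdj_and_dAdj (hirr : ∀ v, ¬ A v v) (hA0 : CondA0 A Set.univ)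
    (hn : 4 ≤ Fintype.card V) (h : IsSplitting A u y p) :
    ∃ v ∈ p, DAdj A u v ∧ DAdj A y v := by
  classical
  by_contra! hno
  have hdefect := length_le_defect fun v hv hadj => hno v hv hadj.1 hadj.2
  have hlt := h.two_add_defect_le_outDeg hirr hA0 hn
  have hle : outCount A u p ≤ p.length := List.countP_le_length
  rw [h.outDeg_eq hirr] at hlt
  omega

lemma arc_to_first (hirr : ∀ v, ¬ A v v) (hA0 : CondA0 A Set.univ) (hn : 4 ≤ Fintype.card V)
    {D q : List V} (h : IsSplitting A u y (D ++ q)) (hD : D.length ≤ defect A u y (D ++ q))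
    (hf : q.head? = some f) (hadj : DAdj A u f) : A u f := by
  classical
  obtain ⟨q, rfl⟩ := List.head?_eq_some_iff.1 hf
  have hlt := h.two_add_defect_le_outDeg hirr hA0 hn
  rw [h.outDeg_eq hirr] at hlt
  obtain ⟨v, hv, huv⟩ := exists_mem_of_length_lt_countP_append (P := A u) (l₁ := D) (l₂ := f :: q)
    (by unfold outCount at hlt; omega)
  rcases List.mem_cons.1 hv with rfl | hvq
  · exact huv
  · have hq : OutsPrecedeIns A u (f :: q) := (List.pairwise_append.1 h.outsPrecedeIns_left).2.1
    exact hadj.resolve_right fun hfu => List.rel_of_pairwise_cons hq hvq ⟨hfu, huv⟩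

lemma arc_from_last (hirr : ∀ v, ¬ A v v) (hA0 : CondA0 A Set.univ) (hn : 4 ≤ Fintype.card V)
    {D q : List V} (h : IsSplitting A u y (q ++ D)) (hD : D.length ≤ defect A u y (q ++ D))
    (ht : q.getLast? = some t) (hadj : DAdj A u t) : A t u := by
  have hrev := h.reverse
  rw [← defect_flip_reverse] at hD
  rw [List.reverse_append] at hrev hD
  exact hrev.arc_to_first (A := flip A) hirr hA0.flip hn (by simpa using hD) (by simpa using ht)
    hadj.symm

lemma exists_arc_from_dropLast (hirr : ∀ v, ¬ A v v) (hA0 : CondA0 A Set.univ)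
    (hn : 4 ≤ Fintype.card V) {q : List V} (h : IsSplitting A u y (D₁ ++ (q ++ [t]) ++ D₂))
    (hD : (D₁ ++ D₂).length ≤ defect A u y (D₁ ++ (q ++ [t]) ++ D₂)) : ∃ v ∈ q, A v u := by
  classical
  have hlt := h.two_add_defect_le_inDeg hirr hA0 hn
  have hperm : (D₁ ++ (q ++ [t]) ++ D₂).Perm ((D₁ ++ D₂ ++ [t]) ++ q) := by
    rw [List.perm_iff_count]
    intro v
    simp only [List.count_append]
    omega
  rw [h.inDeg_eq hirr, inCount, hperm.countP_eq] at hlt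
  refine exists_mem_of_length_lt_countP_append (P := fun v => A v u) (l₁ := D₁ ++ D₂ ++ [t])
    (lt_of_lt_of_le ?_ hlt)
  rw [List.length_append, List.length_singleton]
  omega

lemma exists_isCore (hirr : ∀ v, ¬ A v v) (hA0 : CondA0 A Set.univ) (hn : 4 ≤ Fintype.card V)
    (h : IsSplitting A u y p) :
    ∃ D₁ K D₂ f t, p = D₁ ++ K ++ D₂ ∧ IsCore A u y D₁ K D₂ f t := by
  obtain ⟨D₁, K, D₂, f, t, rfl, hf, ht, ⟨huf, hyf⟩, ⟨hut, hyt⟩, hD⟩ :=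
    exists_eq_append_append_first_last (h.exists_dAdj_and_dAdj hirr hA0 hn)
  have hlen : (D₁ ++ D₂).length ≤ defect A u y (D₁ ++ K ++ D₂) := by
    have := length_le_defect hD
    simp only [defect, nonadjCount_append] at this ⊢
    omega
  have hlen₁ : D₁.length ≤ defect A u y (D₁ ++ (K ++ D₂)) := by
    rw [← List.append_assoc]
    exact (List.sublist_append_left D₁ D₂).length_le.trans hlen
  have hlen₂ := (List.sublist_append_right D₁ D₂).length_le.trans hlen
  have hassoc : IsSplitting A u y (D₁ ++ (K ++ D₂)) := List.append_assoc D₁ K D₂ ▸ h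
  have hf' : (K ++ D₂).head? = some f := by rw [List.head?_append, hf, Option.some_or]
  have ht' : (D₁ ++ K).getLast? = some t := by rw [List.getLast?_append, ht, Option.some_or]
  exact ⟨D₁, K, D₂, f, t, rfl, hf, ht, hassoc.arc_to_first hirr hA0 hn hlen₁ hf' huf,
    hassoc.symm.arc_to_first hirr hA0 hn (defect_comm u y _ ▸ hlen₁) hf' hyf,
    h.arc_from_last hirr hA0 hn hlen₂ ht' hut,
    h.symm.arc_from_last hirr hA0 hn (defect_comm u y _ ▸ hlen₂) ht' hyt, hD, hlen⟩

/- As `u` sends no arc past `Y`, A0 gives `u` so many out-neighbours and `z` so many in-neighbours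
on `Y` that two of them are consecutive. -/
lemma exists_crossing (hirr : ∀ v, ¬ A v v) (hA0 : CondA0 A Set.univ)
    (h : IsSplitting A u y (D₁ ++ (Y ++ z :: Z) ++ D₂))
    (hD : D₁.length ≤ defect A u y (D₁ ++ (Y ++ z :: Z) ++ D₂))
    (hyz : ¬ A y z) (hout : ∀ v ∈ z :: Z ++ D₂, ¬ A u v) :
    ∃ Y₁ a b Y₂, Y = Y₁ ++ a :: b :: Y₂ ∧ A a z ∧ A u b := by
  classical
  by_contra! hno
  have hchain : Y.IsChain fun a b => ¬ (A a z ∧ A u b) :=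
    List.isChain_iff_forall_rel_of_append_cons_cons.2 fun a b Y₁ Y₂ hY hab =>
      hno Y₁ a b Y₂ hY hab.1 hab.2
  have hY : inCount A z Y + outCount A u Y ≤ Y.length + 1 := countP_add_countP_le_of_isChain hchain
  have huz : ¬ A u z := hout z (by simp)
  have hle := h.le_outDeg_add_inDeg hirr hA0 (z := z) (by simp) huz
  have hu : outDeg A u = outCount A u D₁ + outCount A u Y := by
    have hrest : outCount A u (z :: Z ++ D₂) = 0 :=
      List.countP_eq_zero.2 fun v hv => by simpa only [decide_eq_true_eq] using hout v hv
    rw [h.outDeg_eq hirr, List.append_assoc, List.append_assoc, outCount_append, outCount_append,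
      hrest, add_zero]
  have hz : inDeg A z = inCount A z D₁ + inCount A z Y + inCount A z Z + inCount A z D₂ := by
    have hcons : inCount A z (z :: Z) = inCount A z Z := by simp [inCount, hirr z]
    have huyp (q : List V) : inCount A z (u :: y :: q) = inCount A z q := by
      simp [inCount, huz, hyz]
    rw [h.isEnumeration.inDeg_eq, huyp, inCount_append, inCount_append, inCount_append, hcons]
    omega
  have houtD₁ : outCount A u D₁ ≤ D₁.length := List.countP_le_length
  have hinD₁ : inCount A z D₁ ≤ D₁.length := List.countP_le_length
  have hinZ : inCount A z Z ≤ Z.length := List.countP_le_length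
  have hinD₂ : inCount A z D₂ ≤ D₂.length := List.countP_le_length
  have hlen := h.length_add_two
  simp only [List.length_append, List.length_cons] at hlen
  omega

lemma exists_isCycleOn_of_arc_from_getLast (hirr : ∀ v, ¬ A v v) (hA0 : CondA0 A Set.univ) {j : V}
    (h : IsSplitting A u y (D₁ ++ (Y ++ z :: Z) ++ D₂))
    (hK : IsCore A u y D₁ (Y ++ z :: Z) D₂ f t) (hj : Y.getLast? = some j) (hjy : A j y)
    (hu : ∃ i ∈ Y, A i u) : ∃ c, IsCycleOn A c ∧ c.Perm (u :: y :: (Y ++ z :: Z)) := by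
  obtain ⟨i, hi, hiu⟩ := hu
  have hsplit : D₁ ++ (Y ++ z :: Z) ++ D₂ = (D₁ ++ Y) ++ (z :: Z ++ D₂) := by simp
  have hleft : OutsPrecedeIns A u ((D₁ ++ Y) ++ (z :: Z ++ D₂)) := hsplit ▸ h.outsPrecedeIns_left
  have hright : OutsPrecedeIns A y ((D₁ ++ Y) ++ (z :: Z ++ D₂)) :=
    hsplit ▸ h.outsPrecedeIns_right
  have hout : ∀ v ∈ z :: Z ++ D₂, ¬ A u v := fun v hv huv =>
    (List.pairwise_append.1 hleft).2.2 i (List.mem_append_right D₁ hi) v hv ⟨hiu, huv⟩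
  have hyz : ¬ A y z := fun hyz =>
    (List.pairwise_append.1 hright).2.2 j (List.mem_append_right D₁ (List.mem_of_getLast? hj)) z
      (by simp) ⟨hjy, hyz⟩
  obtain ⟨Y₁, a, b, Y₂, rfl, haz, hub⟩ := h.exists_crossing hirr hA0
    ((List.sublist_append_left D₁ D₂).length_le.trans hK.length_le) hyz hout
  refine exists_isCycleOn_of_crossing (h.isEnumeration.1.sublist ?_)
    h.isChain.left_of_append.right_of_append (fun v hv => ?_) (fun v hv => ?_) (fun v hv => ?_)
    haz hub
  · exact (((List.sublist_append_right D₁ _).trans (List.sublist_append_left _ D₂)).cons_cons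
      y).cons_cons u
  · have hf : v = f := by
      have := hK.head?_eq
      rw [List.head?_append, hv, Option.some_or] at this
      exact Option.some_injective V this
    exact hf ▸ hK.right_first
  · have hvj : v = j := Option.some_injective V (hv.symm.trans hj)
    exact hvj ▸ hjy
  · have ht : v = t := by
      have := hK.getLast?_eq
      rw [List.getLast?_append, hv, Option.some_or] at this
      exact Option.some_injective V this
    exact ht ▸ hK.last_left

/- Cut `K` after the last vertex before `t` that sends an arc to `u` or `y`. -/
lemma exists_isCycleOn_perm_core (hirr : ∀ v, ¬ A v v) (hA0 : CondA0 A Set.univ)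
    (hn : 4 ≤ Fintype.card V) (h : IsSplitting A u y (D₁ ++ K ++ D₂))
    (hK : IsCore A u y D₁ K D₂ f t) : ∃ c, IsCycleOn A c ∧ c.Perm (u :: y :: K) := by
  obtain ⟨Q, rfl⟩ := List.getLast?_eq_some_iff.1 hK.getLast?_eq
  obtain ⟨i, hi, hiu⟩ := h.exists_arc_from_dropLast hirr hA0 hn hK.length_le
  obtain ⟨i', hi', hiy⟩ := h.symm.exists_arc_from_dropLast hirr hA0 hn hK.symm.length_le
  obtain ⟨X, j, W, rfl, hj, hW⟩ :=
    exists_eq_append_cons_last (P := fun v => A v u ∨ A v y) ⟨i, hi, .inl hiu⟩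
  have hmem : ∀ v ∈ X ++ j :: W, A v u ∨ A v y → v ∈ X ++ [j] := fun v hv hvuy => by
    have hvW := mt (hW v) (not_not.2 hvuy)
    simp_all
  obtain ⟨z, Z, hz⟩ := List.exists_cons_of_ne_nil (l := W ++ [t]) (by simp)
  have hcut : X ++ j :: W ++ [t] = (X ++ [j]) ++ z :: Z := by simp [← hz]
  rw [hcut] at h hK ⊢
  rcases hj with hju | hjy
  · obtain ⟨c, hc, hperm⟩ := h.symm.exists_isCycleOn_of_arc_from_getLast hirr hA0 hK.symm
      List.getLast?_concat hju ⟨i', hmem i' hi' (.inr hiy), hiy⟩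
    exact ⟨c, hc, hperm.trans (List.Perm.swap u y _)⟩
  · exact h.exists_isCycleOn_of_arc_from_getLast hirr hA0 hK List.getLast?_concat hjy
      ⟨i, hmem i hi (.inl hiu), hiu⟩

lemma exists_hamiltonian (hirr : ∀ v, ¬ A v v) (hA0 : CondA0 A Set.univ)
    (hn : 4 ≤ Fintype.card V) (h : IsSplitting A u y p) :
    ∃ l, IsCycleOn A l ∧ ∀ v, v ∈ l := by
  classical
  obtain ⟨D₁, K, D₂, f, t, rfl, hK⟩ := h.exists_isCore hirr hA0 hn
  obtain ⟨c, hc, hperm⟩ := h.exists_isCycleOn_perm_core hirr hA0 hn hK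
  have henum : IsEnumeration (c ++ (D₁ ++ D₂)) := by
    refine h.isEnumeration.of_perm ((hperm.append_right _).trans ?_)
    rw [List.perm_iff_count]
    intro v
    simp only [List.count_append, List.count_cons]
    omega
  refine hc.exists_hamiltonian hirr henum fun v hv => ?_
  have hvp : v ∈ D₁ ++ K ++ D₂ := by
    simp only [List.mem_append] at hv ⊢
    tauto
  have hlt := h.lt_deg hirr hA0 hvp (hK.not_dAdj_and_dAdj v hv)
  have hle := hK.length_le
  omega

end IsSplitting

end Reinsertion

/-- Theorem G, Manoussakis. -/
theorem manoussakis_hamiltonian [Fintype V] (A : V → V → Prop)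
    (hloops : ∀ v, ¬ A v v)
    (hn : 4 ≤ Fintype.card V) (hconn : StronglyConnected A)
    (hA0 : CondA0 A (Set.univ : Set V)) :
    ∃ l : List V, IsCycleOn A l ∧ ∀ v : V, v ∈ l := by
  have : Nontrivial V := Fintype.one_lt_card_iff_nontrivial.1 (by omega)
  obtain ⟨l, hl⟩ := exists_isLongestCycle (hconn.exists_isCycleOn hloops)
  by_cases hall : ∀ v, v ∈ l
  · exact ⟨l, hl.1, hall⟩
  · obtain ⟨u, hu⟩ := not_forall.1 hall
    obtain ⟨y, p, hsplitting⟩ := hl.exists_isSplitting hloops hA0 hconn hu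
    exact hsplitting.exists_hamiltonian hloops hA0 hn
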